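/- Let G be a threshold graph on {1,…,m} with weight vector w satisfying w_1 ≥ w_2 ≥ ⋯ ≥ w_m, and assume G has no isolated vertices. Then the height of the edge ideal I_G in S equals n. -/

import Mathlib

open MvPolynomial

/-- The height of an ideal: the infimum of the heights of the prime ideals
containing it. -/
noncomputable def idealHeight {A : Type*} [CommRing A] (I : Ideal A) : ℕ∞ :=
  sInf (Order.height '' {p : PrimeSpectrum A | I ≤ p.asIdeal})

/-- The substitution killing the variables in `s`. -/
noncomputable def killVars (K : Type*) [Field K] {m : ℕ} (s : Finset (Fin m)) :
    MvPolynomial (Fin m) K →ₐ[K] MvPolynomial (Fin m) K :=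
  aeval (fun i => if i ∈ s then 0 else X i)

/-- The ideal generated by the variables in `s`. -/
noncomputable def varIdeal (K : Type*) [Field K] {m : ℕ} (s : Finset (Fin m)) :
    Ideal (MvPolynomial (Fin m) K) :=
  Ideal.span (X '' (s : Set (Fin m)))

lemma sub_killVars_mem (K : Type*) [Field K] {m : ℕ} (s : Finset (Fin m))
    (p : MvPolynomial (Fin m) K) : p - killVars K s p ∈ varIdeal K s := by
  induction p using MvPolynomial.induction_on with
  | C a => simp [killVars]
  | add p q hp hq =>
    rw [map_add, add_sub_add_comm]
    exact add_mem hp hq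
  | mul_X p i hp =>
    rw [map_mul]
    have hX : killVars K s (X i) = if i ∈ s then 0 else X i := by simp [killVars]
    rw [hX]
    split_ifs with h
    · rw [mul_zero, sub_zero]
      exact Ideal.mul_mem_left _ _ (Ideal.subset_span ⟨i, h, rfl⟩)
    · rw [← sub_mul]
      exact Ideal.mul_mem_right _ _ hp

lemma varIdeal_eq_ker (K : Type*) [Field K] {m : ℕ} (s : Finset (Fin m)) :
    varIdeal K s = RingHom.ker (killVars K s) := by
  apply le_antisymm
  · refine Ideal.span_le.2 ?_
    rintro _ ⟨i, hi, rfl⟩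
    have hi' : i ∈ s := hi
    simp [RingHom.mem_ker, killVars, hi']
  · intro p hp
    have := sub_killVars_mem K s p
    rwa [(RingHom.mem_ker).1 hp, sub_zero] at this

lemma varIdeal_isPrime (K : Type*) [Field K] {m : ℕ} (s : Finset (Fin m)) :
    (varIdeal K s).IsPrime := by
  rw [varIdeal_eq_ker]
  exact RingHom.ker_isPrime _

lemma X_mem_varIdeal_iff (K : Type*) [Field K] {m : ℕ} (s : Finset (Fin m)) (i : Fin m) :
    (X i : MvPolynomial (Fin m) K) ∈ varIdeal K s ↔ i ∈ s := by
  rw [varIdeal_eq_ker, RingHom.mem_ker]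
  by_cases h : i ∈ s <;> simp [killVars, h]

/-- The prime generated by the variables in `s`. -/
noncomputable def varPrime (K : Type*) [Field K] {m : ℕ} (s : Finset (Fin m)) :
    PrimeSpectrum (MvPolynomial (Fin m) K) :=
  ⟨varIdeal K s, varIdeal_isPrime K s⟩

lemma card_le_height_varPrime (K : Type*) [Field K] {m : ℕ} (s : Finset (Fin m)) :
    (s.card : ℕ∞) ≤ Order.height (varPrime K s) := by
  induction s using Finset.induction_on with
  | empty => simp
  | insert a s ha ih =>
    rw [Finset.card_insert_of_notMem ha, Nat.cast_add, Nat.cast_one]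
    refine le_trans (by gcongr) (Order.height_add_one_le (a := varPrime K s) ?_)
    refine lt_of_le_not_ge ?_ ?_
    · change varIdeal K s ≤ varIdeal K (insert a s)
      exact Ideal.span_mono (Set.image_mono (by simp))
    · intro h
      change varIdeal K (insert a s) ≤ varIdeal K s at h
      exact ha ((X_mem_varIdeal_iff K s a).1 (h ((X_mem_varIdeal_iff K _ a).2 (by simp))))

lemma height_varPrime_le (K : Type*) [Field K] {m : ℕ} (s : Finset (Fin m)) :
    Order.height (varPrime K s) ≤ (s.card : ℕ∞) := by
  classical
  rw [← PrimeSpectrum.height_eq_orderHeight]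
  have hp := varIdeal_isPrime K s
  refine (Ideal.height_le_card_of_mem_minimalPrimes_span_finset
    (s := s.image (X : Fin m → MvPolynomial (Fin m) K)) ?_).trans
      (by exact_mod_cast Finset.card_image_le)
  rw [Finset.coe_image]
  change varIdeal K s ∈ (varIdeal K s).minimalPrimes
  simp [Ideal.minimalPrimes_eq_subsingleton_self]

/-- Let `G` be a threshold graph on `{1,…,m}` with weight
vector `w` satisfying `w_1 ≥ ⋯ ≥ w_m`, without isolated vertices; let
`n := max{i : i ~ j for some j > i}` and `λ_i := max{j : i ~ j}`. Then the
height of the edge ideal `I_G ⊆ S = K[x_1,…,x_m]` equals `n`.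
Vertices are `Fin m` (vertex `v` has 1-based label `v.val + 1`); `i : Fin n`
has 1-based label `i.val + 1`. -/
theorem threshold_edge_ideal_height
    (K : Type*) [Field K]
    (m : ℕ) (hm : 2 ≤ m) (G : SimpleGraph (Fin m)) (w : Fin m → ℝ)
    (hthr : ∀ i j : Fin m, i ≠ j → (G.Adj i j ↔ 0 < w i + w j))
    (hw : Antitone w)
    (hiso : ∀ i, ∃ j, G.Adj i j)
    (n : ℕ) (hn : 1 ≤ n) (hnm : n ≤ m)
    (hn_mem : ∃ j : Fin m, n - 1 < j.val ∧ G.Adj ⟨n - 1, by omega⟩ j)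
    (hn_max : ∀ i j : Fin m, n ≤ i.val → i.val < j.val → ¬ G.Adj i j)
    (lam : Fin n → ℕ)
    (hlam_mem : ∀ i : Fin n, ∃ j : Fin m, j.val + 1 = lam i ∧ G.Adj (Fin.castLE hnm i) j)
    (hlam_max : ∀ (i : Fin n) (j : Fin m), G.Adj (Fin.castLE hnm i) j → j.val < lam i) :
    idealHeight
      (Ideal.span {p : MvPolynomial (Fin m) K |
        ∃ i j : Fin m, G.Adj i j ∧ p = X i * X j}) = (n : ℕ∞) := by
  classical
  unfold idealHeight
  apply le_antisymm
  · set s : Finset (Fin m) := Finset.univ.filter (fun i => i.val < n) with hs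
    have hcard : s.card ≤ n := by
      have : s.card ≤ (Finset.range n).card :=
        Finset.card_le_card_of_injOn Fin.val (by intro i hi; simpa [hs] using hi)
          (fun _ _ _ _ h => Fin.ext h)
      simpa using this
    have hcard' : (s.card : ℕ∞) ≤ (n : ℕ∞) := by exact_mod_cast hcard
    refine le_trans (sInf_le (Set.mem_image_of_mem Order.height (?_ : varPrime K s ∈ _)))
      ((height_varPrime_le K s).trans hcard')
    refine Ideal.span_le.2 ?_
    rintro _ ⟨i, j, hij, rfl⟩
    change X i * X j ∈ varIdeal K s
    by_cases hi : i.val < n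
    · exact Ideal.mul_mem_right _ _ ((X_mem_varIdeal_iff K s i).2 (by simp [hs, hi]))
    by_cases hj : j.val < n
    · exact Ideal.mul_mem_left _ _ ((X_mem_varIdeal_iff K s j).2 (by simp [hs, hj]))
    exfalso
    have hne : i.val ≠ j.val := fun h => hij.ne (Fin.ext h)
    rcases lt_or_gt_of_ne hne with h | h
    · exact hn_max i j (by omega) h hij
    · exact hn_max j i (by omega) h hij.symm
  · refine le_sInf ?_
    rintro _ ⟨p, hp, rfl⟩
    obtain ⟨j0, hj0, hadj0⟩ := hn_mem
    have hpos := (hthr _ _ hadj0.ne).1 hadj0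
    have hclique : ∀ i j : Fin m, i.val < j.val → j.val ≤ n → G.Adj i j := by
      intro i j hij hj
      refine (hthr i j (fun h => by subst h; omega)).2 ?_
      have h1 : w ⟨n - 1, by omega⟩ ≤ w i := hw (Fin.le_def.2 (by simp; omega))
      have h2 : w j0 ≤ w j := hw (Fin.le_def.2 (by omega))
      linarith
    have hcov : ∀ i j : Fin m, i.val ≤ n → j.val ≤ n → i ≠ j →
        X i ∈ p.asIdeal ∨ X j ∈ p.asIdeal := by
      intro i j hi hj hne
      have hadj : G.Adj i j := by
        rcases lt_or_gt_of_ne (fun h => hne (Fin.ext h) : i.val ≠ j.val) with h | h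
        · exact hclique i j h hj
        · exact (hclique j i h hi).symm
      exact p.isPrime.mem_or_mem (hp (Ideal.subset_span ⟨i, j, hadj, rfl⟩))
    have hnm' : n < m := by have := j0.isLt; omega
    set t : Finset (Fin m) := Finset.Iic ⟨n, hnm'⟩ with ht
    have htc : t.card = n + 1 := by simp [ht]
    have hmem : ∀ i, i ∈ t ↔ i.val ≤ n := by intro i; simp [ht, Fin.le_def]
    obtain ⟨s, hsc, hsp⟩ : ∃ s : Finset (Fin m), n ≤ s.card ∧ ∀ i ∈ s, X i ∈ p.asIdeal := by
      by_cases hall : ∀ i ∈ t, X i ∈ p.asIdeal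
      · exact ⟨t, by omega, hall⟩
      · push Not at hall
        obtain ⟨k, hk, hkp⟩ := hall
        refine ⟨t.erase k, by rw [Finset.card_erase_of_mem hk]; omega, fun i hi => ?_⟩
        rw [Finset.mem_erase] at hi
        exact (hcov i k ((hmem i).1 hi.2) ((hmem k).1 hk) hi.1).resolve_right hkp
    calc (n : ℕ∞) ≤ (s.card : ℕ∞) := by exact_mod_cast hsc
      _ ≤ Order.height (varPrime K s) := card_le_height_varPrime K s
      _ ≤ Order.height p := by
        refine Order.height_mono ?_
        change varIdeal K s ≤ p.asIdeal
        refine Ideal.span_le.2 ?_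
        rintro _ ⟨i, hi, rfl⟩
        exact hsp i hi
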